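/- Let (X, B, μ, T) be a measure-preserving probability system with T invertible. For any measurable set A with μ(A) > 0 and any ε > 0, the set S = {n ∈ ℕ : μ(A ∩ T⁻ⁿA) ≥ μ(A)² − ε} is syndetic, i.e., there exists L > 0 such that S ∩ [x, x + L] ≠ ∅ for every real x ≥ 1. -/

import Mathlib

/-!
If the good return times were not syndetic, the complementary set of bad times `n`, those with
`μ (A ∩ T⁻ⁿ A) < μ(A)² - ε`, would contain arbitrarily long intervals. Hence one can build
inductively finite sets `S` of any size all of whose positive differences are bad: if `m` bounds
`S` and `k, …, k + m` are bad, then `k + m` may be added to `S`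
(`exists_finset_forall_sub`). By invariance of `μ`, the sets `T⁻ⁿ A`, `n ∈ S`, have pairwise
intersections of measure at most `μ(A)² - ε`. The second moment inequality
`(∑ μ(Bᵢ))² ≤ ∑∑ μ(Bᵢ ∩ Bⱼ)` (`sq_sum_measureReal_le`) then gives, with `N = |S|`,
`N² μ(A)² ≤ N + N² (μ(A)² - ε) + N ε`, which fails once `N ε > 1 + ε`.
-/

open MeasureTheory

/-- Cauchy-Schwarz for the counting function `∑ 1_{Bᵢ}`, in the form that its variance is
nonnegative. -/
lemma sq_sum_measureReal_le {X ι : Type*} [MeasurableSpace X] (μ : Measure X)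
    [IsProbabilityMeasure μ] (B : ι → Set X) (hB : ∀ i, MeasurableSet (B i)) (S : Finset ι) :
    (∑ i ∈ S, μ.real (B i)) ^ 2 ≤ ∑ i ∈ S, ∑ j ∈ S, μ.real (B i ∩ B j) := by
  have hL : ∀ i, MemLp ((B i).indicator (fun _ => (1 : ℝ))) 2 μ := fun i =>
    memLp_indicator_const 2 (hB i) 1 (Or.inr (measure_ne_top μ _))
  have hI : ∀ C : Set X, MeasurableSet C → Integrable (C.indicator (fun _ => (1 : ℝ))) μ :=
    fun C hC => (integrable_const 1).indicator hC
  have hf : MemLp (fun x => ∑ i ∈ S, (B i).indicator (fun _ => (1 : ℝ)) x) 2 μ :=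
    memLp_finsetSum S fun i _ => hL i
  have h0 := ProbabilityTheory.variance_nonneg
    (fun x => ∑ i ∈ S, (B i).indicator (fun _ => (1 : ℝ)) x) μ
  rw [ProbabilityTheory.variance_eq_sub hf] at h0
  have h1 : ∫ x, ∑ i ∈ S, (B i).indicator (fun _ => (1 : ℝ)) x ∂μ = ∑ i ∈ S, μ.real (B i) := by
    rw [integral_finsetSum S fun i _ => hI _ (hB i)]
    exact Finset.sum_congr rfl fun i _ => by simp [integral_indicator_const, hB i]
  have h2 : ∫ x, ((fun x => ∑ i ∈ S, (B i).indicator (fun _ => (1 : ℝ)) x) ^ 2) x ∂μ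
      = ∑ i ∈ S, ∑ j ∈ S, μ.real (B i ∩ B j) := by
    have h3 : ∀ x, ((fun x => ∑ i ∈ S, (B i).indicator (fun _ => (1 : ℝ)) x) ^ 2) x
        = ∑ i ∈ S, ∑ j ∈ S, (B i ∩ B j).indicator (fun _ => (1 : ℝ)) x := by
      intro x
      simp only [Pi.pow_apply, sq, Finset.sum_mul_sum]
      refine Finset.sum_congr rfl fun i _ => Finset.sum_congr rfl fun j _ => ?_
      by_cases hi : x ∈ B i <;> by_cases hj : x ∈ B j <;> simp [hi, hj]
    simp only [h3]
    rw [integral_finsetSum S fun i _ => integrable_finsetSum S fun j _ =>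
      hI _ ((hB i).inter (hB j))]
    refine Finset.sum_congr rfl fun i _ => ?_
    rw [integral_finsetSum S fun j _ => hI _ ((hB i).inter (hB j))]
    exact Finset.sum_congr rfl fun j _ => by
      simp [integral_indicator_const, (hB i).inter (hB j)]
  rw [h1, h2] at h0
  linarith

/-- A set of naturals containing arbitrarily long intervals (of positive numbers) contains all
positive differences of some finite set of any prescribed size. -/
lemma exists_finset_forall_sub (P : ℕ → Prop)
    (hP : ∀ m : ℕ, ∃ k : ℕ, 0 < k ∧ ∀ n, k ≤ n → n ≤ k + m → P n) (N : ℕ) :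
    ∃ S : Finset ℕ, S.card = N ∧ ∀ i ∈ S, ∀ j ∈ S, i < j → P (j - i) := by
  induction N with
  | zero => exact ⟨∅, by simp⟩
  | succ N ih =>
    obtain ⟨S, hS, h⟩ := ih
    have hle : ∀ i ∈ S, i ≤ S.sup id := fun i hi => Finset.le_sup (f := id) hi
    obtain ⟨k, hk, hkP⟩ := hP (S.sup id)
    refine ⟨insert (k + S.sup id) S, ?_, ?_⟩
    · rw [Finset.card_insert_of_notMem, hS]
      intro hmem
      have := hle _ hmem
      omega
    · intro i hi j hj hij
      rw [Finset.mem_insert] at hi hj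
      rcases hi with rfl | hi <;> rcases hj with rfl | hj
      · omega
      · have := hle j hj
        omega
      · have := hle i hi
        exact hkP _ (by omega) (by omega)
      · exact h i hi j hj hij

theorem khintchine_recurrence {X : Type*} [MeasurableSpace X] (μ : Measure X)
    [IsProbabilityMeasure μ] (T : X → X) (hT : MeasurePreserving T μ μ)
    (hTbij : Function.Bijective T)
    (A : Set X) (hA : MeasurableSet A) (hApos : 0 < μ A) (ε : ℝ) (hε : 0 < ε) :
    ∃ L : ℝ, 0 < L ∧ ∀ x : ℝ, 1 ≤ x → ∃ n : ℕ,
      (μ A).toReal ^ 2 - ε ≤ (μ (A ∩ T^[n] ⁻¹' A)).toReal ∧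
      x ≤ (n : ℝ) ∧ (n : ℝ) ≤ x + L := by
  by_contra! hcon
  set c : ℝ := (μ A).toReal ^ 2 - ε with hc
  have hP : ∀ m : ℕ, ∃ k : ℕ, 0 < k ∧ ∀ n, k ≤ n → n ≤ k + m →
      (μ (A ∩ T^[n] ⁻¹' A)).toReal < c := by
    intro m
    -- The extra `1` absorbs rounding `x` up to an integer.
    obtain ⟨x, hx, h⟩ := hcon (m + 1) (by positivity)
    refine ⟨⌈x⌉₊, Nat.ceil_pos.2 (by linarith), fun n hn hn' => ?_⟩
    have hxn : x ≤ n := (Nat.le_ceil x).trans (by exact_mod_cast hn)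
    have hlt := Nat.ceil_lt_add_one (show 0 ≤ x by linarith)
    have hn2 : (n : ℝ) ≤ ⌈x⌉₊ + m := by exact_mod_cast hn'
    by_contra! hge
    linarith [h n hge hxn]
  obtain ⟨N, hN⟩ := exists_nat_gt ((1 + ε) / ε)
  rw [div_lt_iff₀ hε] at hN
  obtain ⟨S, hcard, hS⟩ := exists_finset_forall_sub _ hP N
  have hmeas : ∀ n, μ.real (T^[n] ⁻¹' A) = (μ A).toReal := fun n => by
    rw [measureReal_def, (hT.iterate n).measure_preimage hA.nullMeasurableSet]
  have hlt : ∀ i ∈ S, ∀ j ∈ S, i < j → μ.real (T^[i] ⁻¹' A ∩ T^[j] ⁻¹' A) ≤ c := by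
    intro i hi j hj hij
    -- By invariance the intersection has the measure of `A ∩ T^{-(j-i)} A`.
    have he : T^[i] ⁻¹' A ∩ T^[j] ⁻¹' A = T^[i] ⁻¹' (A ∩ T^[j - i] ⁻¹' A) := by
      rw [Set.preimage_inter, ← Set.preimage_comp, ← Function.iterate_add,
        Nat.sub_add_cancel hij.le]
    rw [he, measureReal_def, (hT.iterate i).measure_preimage
      (hA.inter ((hT.iterate (j - i)).measurable hA)).nullMeasurableSet]
    exact (hS i hi j hj hij).le
  have hp1 : (μ A).toReal ≤ 1 := measureReal_le_one
  -- On the diagonal the intersection has measure `μ(A)`, and `μ(A) - c ≤ 1 + ε`.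
  have hpair : ∀ i ∈ S, ∀ j ∈ S, μ.real (T^[i] ⁻¹' A ∩ T^[j] ⁻¹' A)
      ≤ c + if i = j then 1 + ε else 0 := by
    intro i hi j hj
    rcases lt_trichotomy i j with hij | rfl | hij
    · simpa [hij.ne] using hlt i hi j hj hij
    · rw [Set.inter_self, hmeas, if_pos rfl]
      nlinarith [sq_nonneg (μ A).toReal]
    · rw [Set.inter_comm]
      simpa [hij.ne'] using hlt j hj i hi hij
  have hsq := sq_sum_measureReal_le μ (fun n => T^[n] ⁻¹' A)
    (fun n => (hT.iterate n).measurable hA) S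
  have hsum : ∑ i ∈ S, ∑ j ∈ S, μ.real (T^[i] ⁻¹' A ∩ T^[j] ⁻¹' A)
      ≤ N * (N * c + (1 + ε)) := by
    refine (Finset.sum_le_sum fun i hi => Finset.sum_le_sum (hpair i hi)).trans_eq ?_
    rw [Finset.sum_congr rfl (g := fun _ => N * c + (1 + ε))]
    · simp [hcard]
      ring
    · intro i hi
      simp [Finset.sum_add_distrib, hcard, hi]
  simp only [hmeas, Finset.sum_const, hcard, nsmul_eq_mul] at hsq
  have hNpos : (0 : ℝ) < N := by
    by_contra! h
    nlinarith
  have hfin := hsq.trans hsum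
  rw [hc] at hfin
  nlinarith [mul_pos hNpos (sub_pos.2 hN)]
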